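/- arXiv:quant-ph/0006128 — 4 statements merged into one kernel-verified Lean document; each statement's English description precedes it below -/
import Mathlib

section
/- Let σ₁ ≥ σ₂ ≥ ... ≥ σ_n ≥ 0 be nonnegative reals with n ≥ 1. Then there exists a complex symmetric n×n matrix with singular values σ₁,...,σ_n and all diagonal entries of modulus equal to c/n for c = max(0, σ₁ − ∑_{i≥2} σ_i)... more weakly: for any complex symmetric n×n matrix S with singular values σ₁ ≥ ... ≥ σ_n, the sum of moduli of its diagonal entries satisfies ∑_i |S_{ii}| ≥ σ₁ − ∑_{i=2}^n σ_i. -/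
open Matrix Finset

lemma thompson_col_sum {n : ℕ} {U : Matrix (Fin n) (Fin n) ℂ}
    (hU : U ∈ Matrix.unitaryGroup (Fin n) ℂ) (k : Fin n) : ∑ i, ‖U i k‖ ^ 2 = 1 := by
  have h := congrFun (congrFun (Matrix.mem_unitaryGroup_iff'.1 hU) k) k
  rw [Matrix.mul_apply, Matrix.one_apply_eq] at h
  have h2 : ((∑ i, ‖U i k‖ ^ 2 : ℝ) : ℂ) = 1 := by
    rw [← h]
    push_cast
    refine Finset.sum_congr rfl fun i _ => ?_
    rw [Matrix.star_apply]
    exact (Complex.conj_mul' (U i k)).symm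
  exact_mod_cast h2

lemma thompson_row_sum {n : ℕ} {U : Matrix (Fin n) (Fin n) ℂ}
    (hU : U ∈ Matrix.unitaryGroup (Fin n) ℂ) (k : Fin n) : ∑ i, ‖U k i‖ ^ 2 = 1 := by
  have h := congrFun (congrFun (Matrix.mem_unitaryGroup_iff.1 hU) k) k
  rw [Matrix.mul_apply, Matrix.one_apply_eq] at h
  have h2 : ((∑ i, ‖U k i‖ ^ 2 : ℝ) : ℂ) = 1 := by
    rw [← h]
    push_cast
    refine Finset.sum_congr rfl fun i _ => ?_
    rw [Matrix.star_apply]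
    exact (Complex.mul_conj' (U k i)).symm
  exact_mod_cast h2

/-- Thompson inequality (second family, `k = 1`): for a complex symmetric matrix `S`
with singular values `σ₁ ≥ ⋯ ≥ σ_n ≥ 0`, the moduli of the diagonal entries satisfy
`∑_i |S_{ii}| ≥ σ₁ − ∑_{i≥2} σ_i`. -/
theorem thompson_diag_singular_values {n : ℕ} [NeZero n]
    (S : Matrix (Fin n) (Fin n) ℂ) (hsymm : Sᵀ = S)
    (σ : Fin n → ℝ) (hσ0 : ∀ i, 0 ≤ σ i) (hσmono : Antitone σ)
    (U V : Matrix (Fin n) (Fin n) ℂ)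
    (hU : U ∈ Matrix.unitaryGroup (Fin n) ℂ) (hV : V ∈ Matrix.unitaryGroup (Fin n) ℂ)
    (hSVD : S = U * Matrix.diagonal (fun i => (σ i : ℂ)) * V) :
    σ 0 - ∑ i ∈ Finset.univ.erase 0, σ i ≤ ∑ i, ‖S i i‖ := by
  by_cases hex : ∃ j, j ≠ 0 ∧ σ 0 ≤ σ j
  · obtain ⟨j, hj, hle⟩ := hex
    have h1 : σ j ≤ ∑ i ∈ Finset.univ.erase 0, σ i :=
      Finset.single_le_sum (fun i _ => hσ0 i) (by simp [hj])
    have h2 : 0 ≤ ∑ i, ‖S i i‖ := Finset.sum_nonneg fun i _ => norm_nonneg _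
    linarith
  push Not at hex
  have hUU : Uᴴ * U = 1 := Matrix.mem_unitaryGroup_iff'.1 hU
  have hUU' : U * Uᴴ = 1 := Matrix.mem_unitaryGroup_iff.1 hU
  have hVV : V * Vᴴ = 1 := Matrix.mem_unitaryGroup_iff.1 hV
  obtain ⟨A, hA⟩ : ∃ A, A = Uᴴ * Vᵀ := ⟨_, rfl⟩
  have hUA : Vᵀ = U * A := by rw [hA, ← Matrix.mul_assoc, hUU', Matrix.one_mul]
  have hVA : V = Aᵀ * Uᵀ := by rw [← Matrix.transpose_mul, ← hUA, Matrix.transpose_transpose]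
  have hVT : Vᵀᴴ * Vᵀ = 1 := by
    have := congrArg Matrix.transpose hVV
    rw [Matrix.transpose_mul, Matrix.transpose_one] at this
    exact this
  have hAu : A ∈ Matrix.unitaryGroup (Fin n) ℂ := by
    rw [Matrix.mem_unitaryGroup_iff', Matrix.star_eq_conjTranspose]
    have : Vᵀᴴ * Vᵀ = Aᴴ * (Uᴴ * U) * A := by
      rw [hUA, Matrix.conjTranspose_mul]; simp only [Matrix.mul_assoc]
    rw [← hVT, this, hUU, Matrix.mul_one]
  set D := Matrix.diagonal (fun i => (σ i : ℂ)) with hD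
  have hUtU : Uᵀ * Uᴴᵀ = 1 := by rw [← Matrix.transpose_mul, hUU, Matrix.transpose_one]
  have key : D * Aᵀ = A * D := by
    have e1 : U * D * (Aᵀ * Uᵀ) = U * A * D * Uᵀ := by
      have h := hsymm
      rw [hSVD, Matrix.transpose_mul, Matrix.transpose_mul, hUA, hD,
        Matrix.diagonal_transpose, ← hD] at h
      rw [← hVA, ← h, Matrix.mul_assoc (U * A)]
    calc D * Aᵀ = (Uᴴ * U) * (D * Aᵀ) * (Uᵀ * Uᴴᵀ) := by simp [hUU, hUtU]
      _ = Uᴴ * (U * D * (Aᵀ * Uᵀ)) * Uᴴᵀ := by simp only [Matrix.mul_assoc]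
      _ = (Uᴴ * U) * (A * D) * (Uᵀ * Uᴴᵀ) := by rw [e1]; simp only [Matrix.mul_assoc]
      _ = A * D := by simp [hUU, hUtU]
  have hk : ∀ j, σ 0 * ‖A j 0‖ = σ j * ‖A 0 j‖ := by
    intro j
    have h := congrFun (congrFun key 0) j
    rw [hD, Matrix.diagonal_mul, Matrix.mul_diagonal, Matrix.transpose_apply] at h
    have h := congrArg norm h
    rw [norm_mul, norm_mul, Complex.norm_real, Complex.norm_real, Real.norm_of_nonneg (hσ0 _),
      Real.norm_of_nonneg (hσ0 _)] at h
    linarith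
  have hc := thompson_col_sum hAu 0
  have hr := thompson_row_sum hAu 0
  have hsum : ∑ j, (σ 0 ^ 2 - σ j ^ 2) * ‖A 0 j‖ ^ 2 = 0 := by
    have : ∀ j, (σ 0 ^ 2 - σ j ^ 2) * ‖A 0 j‖ ^ 2
        = σ 0 ^ 2 * ‖A 0 j‖ ^ 2 - σ 0 ^ 2 * ‖A j 0‖ ^ 2 := by
      intro j
      have h := congrArg (· ^ 2) (hk j)
      simp only [mul_pow] at h
      rw [h]; ring
    simp_rw [this]
    rw [Finset.sum_sub_distrib, ← Finset.mul_sum, ← Finset.mul_sum, hc, hr]; ring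
  have hz : ∀ j, j ≠ 0 → A j 0 = 0 := by
    intro j hj
    have hlt := hex j hj
    have hj0 := hσ0 j
    have hnn : ∀ i ∈ (Finset.univ : Finset (Fin n)), 0 ≤ (σ 0 ^ 2 - σ i ^ 2) * ‖A 0 i‖ ^ 2 := by
      intro i _
      have h1 : σ i ≤ σ 0 := hσmono (Fin.zero_le i)
      have h2 : σ i ^ 2 ≤ σ 0 ^ 2 := pow_le_pow_left₀ (hσ0 i) h1 2
      exact mul_nonneg (by linarith) (by positivity)
    have h := (Finset.sum_eq_zero_iff_of_nonneg hnn).1 hsum j (Finset.mem_univ j)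
    have hpos : σ 0 ^ 2 - σ j ^ 2 ≠ 0 := by nlinarith
    have h0 : ‖A 0 j‖ = 0 := by simpa [hpos] using h
    have h1 := hk j
    rw [h0, mul_zero] at h1
    have h2 : σ 0 ≠ 0 := by linarith
    simpa [h2] using h1
  have hA00 : ‖A 0 0‖ = 1 := by
    rw [Finset.sum_eq_single 0 (fun j _ hj => by simp [hz j hj]) (by simp)] at hc
    nlinarith [norm_nonneg (A 0 0)]
  have hV0 : ∀ i, ‖V 0 i‖ = ‖U i 0‖ := by
    intro i
    have h := congrFun (congrFun hUA i) 0
    rw [Matrix.transpose_apply, Matrix.mul_apply,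
      Finset.sum_eq_single 0 (fun j _ hj => by simp [hz j hj]) (by simp)] at h
    rw [h, norm_mul, hA00, mul_one]
  have hS : ∀ i, σ 0 * ‖U i 0‖ ^ 2
      - ∑ k ∈ Finset.univ.erase 0, σ k * (‖U i k‖ ^ 2 + ‖V k i‖ ^ 2) / 2 ≤ ‖S i i‖ := by
    intro i
    have h : S i i = U i 0 * σ 0 * V 0 i + ∑ k ∈ Finset.univ.erase 0, U i k * σ k * V k i := by
      rw [Finset.add_sum_erase _ (fun k => U i k * σ k * V k i) (Finset.mem_univ _), hSVD,
        Matrix.mul_apply]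
      simp [hD, Matrix.mul_diagonal]
    have h1 : ‖U i 0 * σ 0 * V 0 i‖ = σ 0 * ‖U i 0‖ ^ 2 := by
      rw [norm_mul, norm_mul, hV0, Complex.norm_real, Real.norm_of_nonneg (hσ0 _)]; ring
    have h2 : ‖∑ k ∈ Finset.univ.erase 0, U i k * σ k * V k i‖
        ≤ ∑ k ∈ Finset.univ.erase 0, σ k * (‖U i k‖ ^ 2 + ‖V k i‖ ^ 2) / 2 := by
      refine (norm_sum_le _ _).trans (Finset.sum_le_sum fun k _ => ?_)
      rw [norm_mul, norm_mul, Complex.norm_real, Real.norm_of_nonneg (hσ0 _)]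
      nlinarith [mul_nonneg (hσ0 k) (sq_nonneg (‖U i k‖ - ‖V k i‖))]
    have h3 := norm_sub_le (S i i) (∑ k ∈ Finset.univ.erase 0, U i k * σ k * V k i)
    rw [h, add_sub_cancel_right, h1, ← h] at h3
    linarith
  refine le_trans (le_of_eq ?_) (Finset.sum_le_sum fun i _ => hS i)
  rw [Finset.sum_sub_distrib, ← Finset.mul_sum, thompson_col_sum hU, mul_one, Finset.sum_comm]
  congr 1
  refine Finset.sum_congr rfl fun k _ => ?_
  rw [← Finset.sum_div, ← Finset.mul_sum, Finset.sum_add_distrib, thompson_col_sum hU,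
    thompson_row_sum hV]
  ring
end

section
/- Let A be a complex symmetric n×n matrix with singular values σ₁ ≥ ... ≥ σ_n. Define the concurrence C(ρ) = min over all K ≥ n and all n×K matrices T with T T† = I_n of ∑_{k=1}^K |(Tᵀ A T)_{kk}|. Then C(ρ) = max(0, σ₁ − ∑_{i=2}^n σ_i), and the minimum is attained with K = n when σ₁ ≥ ∑_{i≥2} σ_i. -/
open Matrix Finset

lemma cf_diag {n K : ℕ} (σ : Fin n → ℝ) (U : Matrix (Fin n) (Fin n) ℂ)
    (T : Matrix (Fin n) (Fin K) ℂ) (k : Fin K) :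
    (Tᵀ * (Uᵀ * Matrix.diagonal (fun i => (σ i : ℂ)) * U) * T) k k
      = ∑ i, (σ i : ℂ) * ((U * T) i k) ^ 2 := by
  have h : Tᵀ * (Uᵀ * Matrix.diagonal (fun i => (σ i : ℂ)) * U) * T
      = (U * T)ᵀ * (Matrix.diagonal (fun i => (σ i : ℂ)) * (U * T)) := by
    rw [Matrix.transpose_mul]; simp only [Matrix.mul_assoc]
  rw [h, Matrix.mul_apply]
  refine Finset.sum_congr rfl fun i _ => ?_
  rw [Matrix.diagonal_mul, Matrix.transpose_apply]
  ring

/-- rows of a right-unitary matrix are unit vectors -/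
lemma cf_row {n K : ℕ} (W : Matrix (Fin n) (Fin K) ℂ) (h : W * Wᴴ = 1) (i : Fin n) :
    ∑ k, ‖W i k‖ ^ 2 = 1 := by
  have h1 := congrFun (congrFun h i) i
  rw [Matrix.mul_apply, Matrix.one_apply_eq] at h1
  have h2 : ∀ k, W i k * Wᴴ k i = ((‖W i k‖ ^ 2 : ℝ) : ℂ) := by
    intro k
    rw [Matrix.conjTranspose_apply, Complex.star_def, Complex.mul_conj, Complex.normSq_eq_norm_sq]
  simp only [h2] at h1
  exact_mod_cast h1

lemma cf_lower {n K : ℕ} [NeZero n] (σ : Fin n → ℝ) (hσ0 : ∀ i, 0 ≤ σ i)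
    (W : Matrix (Fin n) (Fin K) ℂ) (h : W * Wᴴ = 1) :
    σ 0 - ∑ i ∈ Finset.univ.erase 0, σ i ≤ ∑ k, ‖∑ i, (σ i : ℂ) * (W i k) ^ 2‖ := by
  have key : ∀ k, σ 0 * ‖W 0 k‖ ^ 2 - ∑ i ∈ Finset.univ.erase 0, σ i * ‖W i k‖ ^ 2
      ≤ ‖∑ i, (σ i : ℂ) * (W i k) ^ 2‖ := by
    intro k
    have hn : ∀ i, ‖(σ i : ℂ) * (W i k) ^ 2‖ = σ i * ‖W i k‖ ^ 2 := by
      intro i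
      rw [norm_mul, norm_pow, Complex.norm_real, Real.norm_of_nonneg (hσ0 i)]
    rw [← Finset.add_sum_erase _ _ (Finset.mem_univ (0 : Fin n))]
    have h1 := norm_sub_le_norm_add ((σ 0 : ℂ) * (W 0 k) ^ 2)
      (∑ i ∈ Finset.univ.erase 0, (σ i : ℂ) * (W i k) ^ 2)
    have h2 := norm_sum_le (Finset.univ.erase (0 : Fin n)) (fun i => (σ i : ℂ) * (W i k) ^ 2)
    simp only [hn] at h1 h2
    linarith
  have hs := Finset.sum_le_sum (fun k (_ : k ∈ Finset.univ) => key k)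
  rw [Finset.sum_sub_distrib, ← Finset.mul_sum, cf_row W h, Finset.sum_comm] at hs
  simp only [← Finset.mul_sum, cf_row W h, mul_one] at hs
  exact hs

lemma cf_split {n : ℕ} [NeZero n] (i : Fin n) (hi : i ≠ 0) (f : Fin n → ℝ) :
    ∑ k, f k = f 0 + (f i + ∑ k ∈ (Finset.univ.erase 0).erase i, f k) := by
  rw [Finset.add_sum_erase _ _ (by simp [hi]), Finset.add_sum_erase _ _ (Finset.mem_univ _)]

lemma cf_ortho {n : ℕ} [NeZero n] (σ : Fin n → ℝ) (hσ0 : ∀ i, 0 ≤ σ i)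
    (d : Fin n → ℝ) (hd0 : d 0 = σ 0) (hd : ∀ i, i ≠ 0 → d i = - σ i)
    (S : Finset (Fin n)) (hS : 0 ∉ S) (hle : ∑ i ∈ S, σ i ≤ σ 0) :
    ∃ O : Fin n → Fin n → ℝ,
      (∀ r s, ∑ k, O r k * O s k = if r = s then 1 else 0) ∧
      (∀ k ∈ S, ∑ r, d r * O r k ^ 2 = 0) ∧
      (∑ r, d r * O r 0 ^ 2 = σ 0 - ∑ i ∈ S, σ i) ∧
      (∀ i, i ∉ S → i ≠ 0 → O i 0 = 0 ∧ ∀ r, O r i = if r = i then 1 else 0) := by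
  induction S using Finset.induction_on with
  | empty =>
    refine ⟨fun r k => if r = k then 1 else 0, ?_, ?_, ?_, ?_⟩
    · intro r s
      simp
    · simp
    · simp [hd0]
    · intro i _ hi
      simp [hi]
  | insert i S hiS ih =>
    have hi0 : i ≠ 0 := by rintro rfl; simp at hS
    have h0S : 0 ∉ S := fun h => hS (Finset.mem_insert_of_mem h)
    rw [Finset.sum_insert hiS] at hle
    obtain ⟨O, hO, hz, hq, he⟩ := ih h0S (by linarith [hσ0 i])
    obtain ⟨hi1, hi2⟩ := he i hiS hi0
    set s := σ 0 - ∑ j ∈ S, σ j with hs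
    have hspos : σ i ≤ s := by linarith
    obtain ⟨α, β, hab, hab2⟩ : ∃ α β : ℝ, α ^ 2 + β ^ 2 = 1 ∧ α ^ 2 * s - β ^ 2 * σ i = 0 := by
      by_cases h0 : s + σ i = 0
      · have : σ i = 0 := by linarith [hσ0 i]
        have hs0 : s = 0 := by linarith
        exact ⟨1, 0, by norm_num, by rw [hs0]; ring⟩
      · have hp : 0 < s + σ i := lt_of_le_of_ne (by linarith [hσ0 i]) (Ne.symm h0)
        refine ⟨√(σ i / (s + σ i)), √(s / (s + σ i)), ?_, ?_⟩
        · rw [Real.sq_sqrt (div_nonneg (hσ0 i) hp.le),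
            Real.sq_sqrt (div_nonneg (by linarith [hσ0 i]) hp.le)]
          field_simp
          ring
        · rw [Real.sq_sqrt (div_nonneg (hσ0 i) hp.le),
            Real.sq_sqrt (div_nonneg (by linarith [hσ0 i]) hp.le)]
          field_simp
          ring
    have hquad : ∀ x y : ℝ, ∑ r, d r * (x * O r 0 + y * O r i) ^ 2 = x ^ 2 * s - y ^ 2 * σ i := by
      intro x y
      have : ∀ r, d r * (x * O r 0 + y * O r i) ^ 2
          = x ^ 2 * (d r * O r 0 ^ 2) + y ^ 2 * (if r = i then d r else 0) := by
        intro r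
        rw [hi2 r]
        by_cases hri : r = i
        · subst hri
          simp [hi1]; ring
        · simp [hri]; ring
      simp only [this, Finset.sum_add_distrib, ← Finset.mul_sum, hq]
      simp [hd i hi0]; ring
    let P : Fin n → Fin n → ℝ := fun r k =>
      if k = 0 then β * O r 0 + (-α) * O r i else if k = i then α * O r 0 + β * O r i else O r k
    have hP0 : ∀ r, P r 0 = β * O r 0 + (-α) * O r i := fun r => by simp [P]
    have hPi : ∀ r, P r i = α * O r 0 + β * O r i := fun r => by simp [P, hi0]
    have hPk : ∀ r k, k ≠ 0 → k ≠ i → P r k = O r k := fun r k h1 h2 => by simp [P, h1, h2]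
    refine ⟨P, ?_, ?_, ?_, ?_⟩
    · intro r t
      rw [← hO r t, cf_split i hi0, cf_split i hi0 (fun k => O r k * O t k)]
      have : ∑ k ∈ (Finset.univ.erase 0).erase i, P r k * P t k
          = ∑ k ∈ (Finset.univ.erase 0).erase i, O r k * O t k := by
        refine Finset.sum_congr rfl fun k hk => ?_
        simp only [Finset.mem_erase] at hk
        rw [hPk _ _ hk.2.1 hk.1, hPk _ _ hk.2.1 hk.1]
      rw [this, hP0, hP0, hPi, hPi]
      linear_combination (O r 0 * O t 0 + O r i * O t i) * hab
    · intro k hk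
      rw [Finset.mem_insert] at hk
      rcases hk with rfl | hk
      · simp only [hPi]
        rw [hquad, hab2]
      · have h1 : k ≠ 0 := fun h => h0S (h ▸ hk)
        have h2 : k ≠ i := fun h => hiS (h ▸ hk)
        simp only [hPk _ k h1 h2]
        exact hz k hk
    · simp only [hP0]
      rw [hquad, Finset.sum_insert hiS]
      linear_combination (s - σ i) * hab - hab2 + hs
    · intro j hj hj0
      rw [Finset.mem_insert, not_or] at hj
      obtain ⟨h1, h2⟩ := he j hj.2 hj0
      refine ⟨?_, fun r => ?_⟩
      · rw [hP0, h1, hi2, if_neg hj.1]; ring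
      · rw [hPk _ _ hj0 hj.1, h2]

lemma cf_case1 {n : ℕ} [NeZero n] (σ : Fin n → ℝ) (hσ0 : ∀ i, 0 ≤ σ i)
    (hle : ∑ i ∈ Finset.univ.erase 0, σ i ≤ σ 0) :
    ∃ W : Matrix (Fin n) (Fin n) ℂ, W * Wᴴ = 1 ∧
      ∑ k, ‖∑ i, (σ i : ℂ) * (W i k) ^ 2‖ = σ 0 - ∑ i ∈ Finset.univ.erase 0, σ i := by
  obtain ⟨O, hO, hz, hq, -⟩ := cf_ortho σ hσ0 (fun i => if i = 0 then σ 0 else - σ i)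
    (by simp) (fun i hi => by simp [hi]) (Finset.univ.erase 0) (by simp) hle
  let p : Fin n → ℂ := fun i => if i = 0 then 1 else Complex.I
  have hp : ∀ i, p i * star (p i) = 1 := by
    intro i
    by_cases h : i = 0 <;> simp [p, h]
  refine ⟨Matrix.of fun i k => p i * (O i k : ℂ), ?_, ?_⟩
  · ext r s
    rw [Matrix.mul_apply, Matrix.one_apply]
    have h1 : ∀ k, (Matrix.of fun i k => p i * (O i k : ℂ)) r k *
        (Matrix.of fun i k => p i * (O i k : ℂ))ᴴ k s
        = p r * star (p s) * ((O r k * O s k : ℝ) : ℂ) := by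
      intro k
      simp only [Matrix.conjTranspose_apply, Matrix.of_apply, star_mul', Complex.star_def,
        Complex.conj_ofReal]
      push_cast
      ring
    simp only [h1]
    rw [← Finset.mul_sum, ← Complex.ofReal_sum, hO]
    by_cases hrs : r = s
    · subst hrs
      simpa using hp r
    · simp [hrs]
  · have h1 : ∀ k, ∑ i, (σ i : ℂ) * ((Matrix.of fun i k => p i * (O i k : ℂ)) i k) ^ 2
        = ((∑ i, (if i = 0 then σ 0 else - σ i) * O i k ^ 2 : ℝ) : ℂ) := by
      intro k
      rw [Complex.ofReal_sum]
      refine Finset.sum_congr rfl fun i _ => ?_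
      by_cases hi : i = 0
      · simp [p, hi]
      · simp [p, hi, mul_pow]
    simp only [h1, Complex.norm_real]
    rw [← Finset.add_sum_erase _ _ (Finset.mem_univ (0 : Fin n)), hq,
      Real.norm_of_nonneg (by linarith), add_eq_left]
    refine Finset.sum_eq_zero fun k hk => ?_
    rw [hz k hk, norm_zero]

lemma cf_signs {ι : Type*} [DecidableEq ι] (σ : ι → ℝ) (M : ℝ) (hM : 0 ≤ M) (S : Finset ι)
    (h : ∀ i ∈ S, 0 ≤ σ i ∧ σ i ≤ M) :
    ∃ e : ι → ℝ, (∀ i, e i = 1 ∨ e i = -1) ∧ |∑ i ∈ S, σ i * e i| ≤ M := by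
  induction S using Finset.induction_on with
  | empty => exact ⟨fun _ => 1, by simp, by simpa⟩
  | insert i S hiS ih =>
    obtain ⟨e, he, hb⟩ := ih fun j hj => h j (Finset.mem_insert_of_mem hj)
    obtain ⟨h1, h2⟩ := h i (Finset.mem_insert_self _ _)
    rw [abs_le] at hb
    have hc : ∀ c : ℝ, ∑ j ∈ S, σ j * Function.update e i c j = ∑ j ∈ S, σ j * e j := by
      intro c
      refine Finset.sum_congr rfl fun j hj => ?_
      have hji : j ≠ i := by rintro rfl; exact hiS hj
      rw [Function.update_of_ne hji]
    have hu : ∀ c : ℝ, (c = 1 ∨ c = -1) → ∀ j, Function.update e i c j = 1 ∨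
        Function.update e i c j = -1 := by
      intro c hc1 j
      by_cases hj : j = i
      · subst hj; simpa using hc1
      · simpa [hj] using he j
    rcases le_total 0 (∑ j ∈ S, σ j * e j) with h0 | h0
    · refine ⟨Function.update e i (-1), hu _ (Or.inr rfl), ?_⟩
      rw [Finset.sum_insert hiS, hc, Function.update_self, abs_le]
      constructor <;> linarith
    · refine ⟨Function.update e i 1, hu _ (Or.inl rfl), ?_⟩
      rw [Finset.sum_insert hiS, hc, Function.update_self, abs_le]
      constructor <;> linarith

lemma cf_phases {n : ℕ} [NeZero n] (σ : Fin n → ℝ) (hσ0 : ∀ i, 0 ≤ σ i) (hσmono : Antitone σ)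
    (hle : σ 0 ≤ ∑ i ∈ Finset.univ.erase 0, σ i) :
    ∃ z : Fin n → ℂ, (∀ i, ‖z i‖ = 1) ∧ ∑ i, (σ i : ℂ) * z i = 0 := by
  obtain ⟨e, he, hb⟩ := cf_signs σ (σ 0) (hσ0 0) (Finset.univ.erase 0)
    (fun i _ => ⟨hσ0 i, hσmono (Fin.zero_le i)⟩)
  let y : ℝ → Fin n → ℂ := fun t i =>
    Complex.exp (((t * (if e i = 1 then 0 else Real.pi) : ℝ) : ℂ) * Complex.I)
  have hy : ∀ t i, ‖y t i‖ = 1 := fun t i => Complex.norm_exp_ofReal_mul_I _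
  have hy0 : ∀ i, y 0 i = 1 := fun i => by simp [y]
  have hy1 : ∀ i, y 1 i = (e i : ℂ) := by
    intro i
    rcases he i with h | h
    · simp [y, h]
    · have : ¬ ((-1 : ℝ) = 1) := by norm_num
      simp [y, h, this]
  let f : ℝ → ℝ := fun t => ‖∑ i ∈ Finset.univ.erase 0, (σ i : ℂ) * y t i‖
  have hf : Continuous f := by
    simp only [f, y]
    fun_prop
  have hf0 : σ 0 ≤ f 0 := by
    simp only [f, hy0, mul_one]
    rw [← Complex.ofReal_sum, Complex.norm_real]
    exact hle.trans (Real.le_norm_self _)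
  have hf1 : f 1 ≤ σ 0 := by
    simp only [f, hy1, ← Complex.ofReal_mul]
    rw [← Complex.ofReal_sum, Complex.norm_real]
    exact hb
  obtain ⟨t, -, ht⟩ := intermediate_value_Icc' (zero_le_one' ℝ) hf.continuousOn ⟨hf1, hf0⟩
  set w := ∑ i ∈ Finset.univ.erase 0, (σ i : ℂ) * y t i with hw
  have hwn : ‖w‖ = σ 0 := ht
  obtain ⟨c, hc, hcw⟩ : ∃ c : ℂ, ‖c‖ = 1 ∧ (σ 0 : ℂ) * c + w = 0 := by
    by_cases h0 : σ 0 = 0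
    · rw [h0, norm_eq_zero] at hwn
      exact ⟨1, by simp, by simp [h0, hwn]⟩
    · refine ⟨-w / (σ 0 : ℂ), ?_, ?_⟩
      · rw [norm_div, norm_neg, hwn, Complex.norm_real, Real.norm_of_nonneg (hσ0 0), div_self h0]
      · have : (σ 0 : ℂ) ≠ 0 := by exact_mod_cast h0
        field_simp
        ring
  refine ⟨fun i => if i = 0 then c else y t i, ?_, ?_⟩
  · intro i
    by_cases hi : i = 0
    · simpa [hi] using hc
    · simpa [hi] using hy t i
  · rw [← Finset.add_sum_erase _ _ (Finset.mem_univ (0 : Fin n)), ← hcw, hw]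
    simp only [if_true]
    congr 1
    refine Finset.sum_congr rfl fun i hi => ?_
    rw [if_neg (Finset.ne_of_mem_erase hi)]

lemma cf_hadamard {n : ℕ} (i j : Fin n) :
    ∑ x : Fin n → Bool, ((if x i then 1 else -1) * (if x j then 1 else -1) : ℂ)
      = if i = j then (2 : ℂ) ^ n else 0 := by
  by_cases hij : i = j
  · subst hij
    have : ∀ x : Fin n → Bool, ((if x i then 1 else -1) * (if x i then 1 else -1) : ℂ) = 1 := by
      intro x
      cases x i <;> simp
    simp [this]
  · rw [if_neg hij]
    refine Finset.sum_involution (fun x _ => Function.update x i (!(x i))) ?_ ?_ ?_ ?_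
    · intro x _
      rw [Function.update_self, Function.update_of_ne (Ne.symm hij)]
      cases x i <;> cases x j <;> simp
    · intro x _ _ h
      have := congrFun h i
      simp at this
    · intro x _
      simp
    · intro x _
      simp

lemma cf_case2 {n : ℕ} [NeZero n] (σ : Fin n → ℝ) (hσ0 : ∀ i, 0 ≤ σ i) (hσmono : Antitone σ)
    (hle : σ 0 ≤ ∑ i ∈ Finset.univ.erase 0, σ i) :
    ∃ W : Matrix (Fin n) (Fin (2 ^ n)) ℂ, W * Wᴴ = 1 ∧
      ∑ k, ‖∑ i, (σ i : ℂ) * (W i k) ^ 2‖ = 0 := by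
  obtain ⟨z, hz, hsum⟩ := cf_phases σ hσ0 hσmono hle
  have hex : ∀ i, ∃ w : ℂ, w ^ 2 = z i := fun i => IsAlgClosed.exists_pow_nat_eq (z i) two_pos
  choose w hw using hex
  have hwn : ∀ i, w i * star (w i) = 1 := by
    intro i
    have h1 : ‖w i‖ ^ 2 = 1 := by rw [← norm_pow, hw, hz]
    rw [Complex.star_def, Complex.mul_conj, Complex.normSq_eq_norm_sq, h1, Complex.ofReal_one]
  let E : Fin (2 ^ n) ≃ (Fin n → Bool) := (Fintype.equivFinOfCardEq (by simp)).symm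
  let c : ℝ := √((2 ^ n : ℝ)⁻¹)
  have hc : (c : ℂ) * c = ((2 : ℂ) ^ n)⁻¹ := by
    rw [← Complex.ofReal_mul, Real.mul_self_sqrt (by positivity)]
    push_cast
    rfl
  let W : Matrix (Fin n) (Fin (2 ^ n)) ℂ :=
    Matrix.of fun i k => w i * c * (if E k i then 1 else -1)
  have hW : ∀ i k, W i k = w i * c * (if E k i then 1 else -1) := fun _ _ => rfl
  refine ⟨W, ?_, ?_⟩
  · ext r s
    rw [Matrix.mul_apply, Matrix.one_apply]
    have h1 : ∀ k, W r k * Wᴴ k s = w r * star (w s) * (c * c) *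
        ((if E k r then 1 else -1) * (if E k s then 1 else -1) : ℂ) := by
      intro k
      rw [Matrix.conjTranspose_apply, hW, hW]
      have h2 : star (if E k s then 1 else -1 : ℂ) = if E k s then 1 else -1 := by
        cases E k s <;> simp
      have h3 : star (c : ℂ) = c := Complex.conj_ofReal c
      rw [star_mul', star_mul', h2, h3]
      ring
    simp only [h1]
    rw [← Finset.mul_sum, Equiv.sum_comp E
      (fun x => ((if x r then 1 else -1) * (if x s then 1 else -1) : ℂ)), cf_hadamard, hc]
    by_cases hrs : r = s
    · subst hrs
      rw [if_pos rfl, if_pos rfl, hwn, one_mul, inv_mul_cancel₀ (pow_ne_zero n two_ne_zero)]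
    · simp [hrs]
  · refine Finset.sum_eq_zero fun k _ => ?_
    rw [norm_eq_zero]
    have h1 : ∀ i, (σ i : ℂ) * (W i k) ^ 2 = (c * c) * ((σ i : ℂ) * z i) := by
      intro i
      have h2 : (if E k i then 1 else -1 : ℂ) ^ 2 = 1 := by
        cases E k i <;> simp
      rw [hW, mul_pow, mul_pow, h2, hw]
      ring
    simp only [h1]
    rw [← Finset.mul_sum, hsum, mul_zero]

/-- Wootters' concurrence formula: for a complex symmetric matrix `A` with Takagi
decomposition `A = Uᵀ Σ U` and singular values `σ₁ ≥ ⋯ ≥ σ_n`, the infimum over all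
`K ≥ n` and right-unitary `n × K` matrices `T` of `∑_k |(Tᵀ A T)_{kk}|` equals
`max(0, σ₁ − ∑_{i≥2} σ_i)`, and it is attained with `K = n` when `σ₁ ≥ ∑_{i≥2} σ_i`. -/
theorem concurrence_formula {n : ℕ} [NeZero n]
    (A : Matrix (Fin n) (Fin n) ℂ) (hsymm : Aᵀ = A)
    (σ : Fin n → ℝ) (hσ0 : ∀ i, 0 ≤ σ i) (hσmono : Antitone σ)
    (U : Matrix (Fin n) (Fin n) ℂ) (hU : U ∈ Matrix.unitaryGroup (Fin n) ℂ)
    (hTakagi : A = Uᵀ * Matrix.diagonal (fun i => (σ i : ℂ)) * U) :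
    IsGLB {c : ℝ | ∃ (K : ℕ), n ≤ K ∧ ∃ T : Matrix (Fin n) (Fin K) ℂ,
        T * Tᴴ = 1 ∧ c = ∑ k, ‖(Tᵀ * A * T) k k‖}
      (max 0 (σ 0 - ∑ i ∈ Finset.univ.erase 0, σ i)) ∧
    ((∑ i ∈ Finset.univ.erase 0, σ i) ≤ σ 0 →
      ∃ T : Matrix (Fin n) (Fin n) ℂ, T * Tᴴ = 1 ∧
        ∑ k, ‖(Tᵀ * A * T) k k‖ =
          max 0 (σ 0 - ∑ i ∈ Finset.univ.erase 0, σ i)) := by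
  have hU1 : U * Uᴴ = 1 := Matrix.mem_unitaryGroup_iff.mp hU
  have hU2 : Uᴴ * U = 1 := Matrix.mem_unitaryGroup_iff'.mp hU
  have transfer : ∀ (K : ℕ) (W : Matrix (Fin n) (Fin K) ℂ), W * Wᴴ = 1 →
      ∃ T : Matrix (Fin n) (Fin K) ℂ, T * Tᴴ = 1 ∧
        ∑ k, ‖(Tᵀ * A * T) k k‖ = ∑ k, ‖∑ i, (σ i : ℂ) * (W i k) ^ 2‖ := by
    intro K W hW
    refine ⟨Uᴴ * W, ?_, ?_⟩
    · rw [Matrix.conjTranspose_mul, Matrix.conjTranspose_conjTranspose, Matrix.mul_assoc,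
        ← Matrix.mul_assoc W, hW, Matrix.one_mul, hU2]
    · refine Finset.sum_congr rfl fun k _ => ?_
      rw [hTakagi, cf_diag, ← Matrix.mul_assoc, hU1, Matrix.one_mul]
  have attain : (∑ i ∈ Finset.univ.erase 0, σ i) ≤ σ 0 →
      ∃ T : Matrix (Fin n) (Fin n) ℂ, T * Tᴴ = 1 ∧
        ∑ k, ‖(Tᵀ * A * T) k k‖ =
          max 0 (σ 0 - ∑ i ∈ Finset.univ.erase 0, σ i) := by
    intro hle
    obtain ⟨W, hW, hs⟩ := cf_case1 σ hσ0 hle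
    obtain ⟨T, hT, hTs⟩ := transfer n W hW
    exact ⟨T, hT, by rw [hTs, hs, max_eq_right (by linarith)]⟩
  refine ⟨⟨?_, ?_⟩, attain⟩
  · rintro c ⟨K, -, T, hT, rfl⟩
    refine max_le (Finset.sum_nonneg fun _ _ => norm_nonneg _) ?_
    have hW : (U * T) * (U * T)ᴴ = 1 := by
      rw [Matrix.conjTranspose_mul, Matrix.mul_assoc, ← Matrix.mul_assoc T, hT, Matrix.one_mul, hU1]
    have h := cf_lower σ hσ0 (U * T) hW
    rw [hTakagi]
    simp only [cf_diag]
    exact h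
  · intro b hb
    rcases le_total (∑ i ∈ Finset.univ.erase 0, σ i) (σ 0) with hle | hle
    · obtain ⟨T, hT, hs⟩ := attain hle
      exact hb ⟨n, le_rfl, T, hT, hs.symm⟩
    · obtain ⟨W, hW, hs⟩ := cf_case2 σ hσ0 hσmono hle
      obtain ⟨T, hT, hTs⟩ := transfer _ W hW
      rw [max_eq_left (by linarith)]
      exact hb ⟨2 ^ n, Nat.lt_two_pow_self.le, T, hT, by rw [hTs, hs]⟩
end

section
/- Every complex symmetric matrix A admits a Takagi decomposition: there exists a unitary matrix U and a nonnegative diagonal matrix Σ such that A = Uᵀ Σ U, where the diagonal entries of Σ are the singular values of A. -/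
open Matrix

lemma takagi_phase (w : ℂ) : ∃ c : ℂ, ‖c‖ = 1 ∧ c * c * w = (‖w‖ : ℂ) := by
  refine ⟨Complex.exp (((-w.arg / 2 : ℝ) : ℂ) * Complex.I), Complex.norm_exp_ofReal_mul_I _, ?_⟩
  have h := Complex.norm_mul_exp_arg_mul_I w
  rw [← Complex.exp_add]
  conv_lhs => rw [← h]
  rw [mul_left_comm, ← Complex.exp_add]
  push_cast
  ring_nf
  simp [mul_comm Complex.I]

lemma takagi_quad (a C : ℝ) (h : ∀ t : ℝ, 2 * t * a ≤ t ^ 2 * C) : a = 0 := by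
  have hK : 0 < |C| + 1 := by positivity
  have h1 := h (a / (|C| + 1))
  have h2 : 2 * a ^ 2 * (|C| + 1) ≤ a ^ 2 * C := by
    have : 2 * (a / (|C| + 1)) * a * (|C| + 1) ^ 2 ≤ (a / (|C| + 1)) ^ 2 * C * (|C| + 1) ^ 2 := by
      gcongr
    field_simp at this
    nlinarith
  have h3 := le_abs_self C
  have h4 := mul_le_mul_of_nonneg_left h3 (sq_nonneg a)
  have h5 := mul_nonneg (sq_nonneg a) (abs_nonneg C)
  have : a ^ 2 = 0 := by nlinarith [sq_nonneg a]
  simpa using this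

lemma takagi_max {V : Type} [NormedAddCommGroup V] [InnerProductSpace ℂ V]
    [FiniteDimensional ℂ V] [Nontrivial V] (B : V →ₗ[ℂ] V →ₗ[ℂ] ℂ) :
    ∃ (x : V) (M : ℝ), ‖x‖ = 1 ∧ 0 ≤ M ∧ B x x = (M : ℂ) ∧ ∀ z, ‖B z z‖ ≤ M * ‖z‖ ^ 2 := by
  have : ProperSpace V := FiniteDimensional.proper ℂ V
  have hcont : Continuous fun x : V => ‖B x x‖ := by
    let B' : V →ₗ[ℂ] (V →L[ℂ] ℂ) := (LinearMap.toContinuousLinearMap).toLinearMap ∘ₗ B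
    have h1 : Continuous B' := B'.continuous_of_finiteDimensional
    have h2 : Continuous fun x : V => ‖B' x x‖ := by fun_prop
    exact h2
  have hne : (Metric.sphere (0 : V) 1).Nonempty := by
    obtain ⟨y, hy⟩ := exists_ne (0 : V)
    refine ⟨((‖y‖⁻¹ : ℝ) : ℂ) • y, ?_⟩
    have : ‖y‖ ≠ 0 := norm_ne_zero_iff.mpr hy
    simp [norm_smul, this]
  obtain ⟨x, hx, hmax⟩ := (isCompact_sphere (0 : V) 1).exists_isMaxOn hne hcont.continuousOn
  have hx1 : ‖x‖ = 1 := by simpa using hx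
  obtain ⟨c, hc, hcw⟩ := takagi_phase (B x x)
  refine ⟨c • x, ‖B x x‖, by simp [norm_smul, hc, hx1], norm_nonneg _, ?_, ?_⟩
  · simp [← hcw, mul_assoc]
  · intro z
    by_cases hz : z = 0
    · simp [hz]
    have hz' : ‖z‖ ≠ 0 := norm_ne_zero_iff.mpr hz
    have h := hmax (show ((‖z‖⁻¹ : ℝ) : ℂ) • z ∈ Metric.sphere (0 : V) 1 by
      simp [norm_smul, hz'])
    simp at h
    have h' : ‖z‖⁻¹ * (‖z‖⁻¹ * ‖B z z‖) * ‖z‖ ^ 2 ≤ ‖B x x‖ * ‖z‖ ^ 2 := by gcongr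
    have e : ‖z‖⁻¹ * (‖z‖⁻¹ * ‖B z z‖) * ‖z‖ ^ 2 = ‖B z z‖ := by field_simp
    rwa [e] at h'

lemma takagi_orth {V : Type} [NormedAddCommGroup V] [InnerProductSpace ℂ V]
    (B : V →ₗ[ℂ] V →ₗ[ℂ] ℂ) (hB : ∀ x y, B x y = B y x) (x : V) (M : ℝ) (hx : ‖x‖ = 1)
    (hM : B x x = (M : ℂ)) (hmax : ∀ z, ‖B z z‖ ≤ M * ‖z‖ ^ 2) (y : V)
    (hy : inner ℂ x y = 0) : B x y = 0 := by
  set w := B x y with hw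
  suffices h : ‖w‖ ^ 2 = 0 by simpa using h
  apply takagi_quad _ (M * ‖w‖ ^ 2 * ‖y‖ ^ 2 - ((starRingEnd ℂ w) ^ 2 * B y y).re)
  intro t
  have h1 := hmax (x + ((t : ℂ) * starRingEnd ℂ w) • y)
  have h2 : ‖x + ((t : ℂ) * starRingEnd ℂ w) • y‖ ^ 2 = 1 + t ^ 2 * ‖w‖ ^ 2 * ‖y‖ ^ 2 := by
    have := norm_add_sq_eq_norm_sq_add_norm_sq_of_inner_eq_zero (𝕜 := ℂ) x
      (((t : ℂ) * starRingEnd ℂ w) • y) (by simp [inner_smul_right, hy])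
    rw [sq, this, hx]
    simp only [norm_smul, norm_mul, Complex.norm_real, RCLike.norm_conj, Real.norm_eq_abs]
    rw [← sq_abs t]; ring
  have h3 : B (x + ((t : ℂ) * starRingEnd ℂ w) • y) (x + ((t : ℂ) * starRingEnd ℂ w) • y)
      = ((M + 2 * t * ‖w‖ ^ 2 : ℝ) : ℂ) + ((t ^ 2 : ℝ) : ℂ) * ((starRingEnd ℂ w) ^ 2 * B y y) := by
    have e : starRingEnd ℂ w * w = ((‖w‖ ^ 2 : ℝ) : ℂ) := by
      rw [Complex.conj_mul']; push_cast; rfl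
    simp only [map_add, map_smul, LinearMap.add_apply, LinearMap.smul_apply, smul_eq_mul, hM,
      hB y x, ← hw]
    push_cast at e ⊢
    linear_combination (2 * t : ℂ) * e
  have h4 := (Complex.re_le_norm _).trans h1
  rw [h2, h3, Complex.add_re, Complex.re_ofReal_mul, Complex.ofReal_re] at h4
  linarith

lemma takagi_basis (n : ℕ) : ∀ (V : Type) [NormedAddCommGroup V] [InnerProductSpace ℂ V]
    [FiniteDimensional ℂ V], Module.finrank ℂ V = n → ∀ (B : V →ₗ[ℂ] V →ₗ[ℂ] ℂ),
    (∀ x y, B x y = B y x) → ∃ (v : Fin n → V) (σ : Fin n → ℝ), Orthonormal ℂ v ∧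
      (∀ i, 0 ≤ σ i) ∧ ∀ i j, B (v i) (v j) = if i = j then (σ i : ℂ) else 0 := by
  induction n with
  | zero =>
    intro V _ _ _ _ B _
    exact ⟨Fin.elim0, Fin.elim0, ⟨fun i => i.elim0, fun i => i.elim0⟩, fun i => i.elim0,
      fun i => i.elim0⟩
  | succ n ih =>
    intro V _ _ _ hn B hB
    have : Nontrivial V := Module.nontrivial_of_finrank_pos (R := ℂ) (by omega)
    obtain ⟨x, M, hx, hM0, hM, hmax⟩ := takagi_max B
    have hx0 : x ≠ 0 := by rintro rfl; simp at hx
    let K : Submodule ℂ V := (ℂ ∙ x)ᗮ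
    have hK : Module.finrank ℂ K = n := by
      have : Fact (Module.finrank ℂ V = n + 1) := ⟨hn⟩
      exact Submodule.finrank_orthogonal_span_singleton hx0
    obtain ⟨v, σ, hv, hσ, hvB⟩ := ih K hK (B.domRestrict₁₂ K K) (fun a b => hB a b)
    have hxv : ∀ i, inner ℂ x (v i : V) = 0 := fun i =>
      Submodule.mem_orthogonal_singleton_iff_inner_right.mp (v i).2
    have hBx : ∀ i, B x (v i : V) = 0 := fun i => takagi_orth B hB x M hx hM hmax _ (hxv i)
    rw [orthonormal_iff_ite] at hv
    refine ⟨Fin.cons x (fun i => (v i : V)), Fin.cons M σ, ?_, ?_, ?_⟩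
    · rw [orthonormal_iff_ite]
      intro i j
      cases i using Fin.cases <;> cases j using Fin.cases
      · simp [inner_self_eq_norm_sq_to_K, hx]
      · simp [hxv, (Fin.succ_ne_zero _).symm]
      · simp [inner_eq_zero_symm.mp (hxv _), Fin.succ_ne_zero]
      · rename_i i j
        simpa using hv i j
    · intro i
      cases i using Fin.cases
      · simpa
      · simpa using hσ _
    · intro i j
      cases i using Fin.cases <;> cases j using Fin.cases
      · simpa
      · simp [hBx, (Fin.succ_ne_zero _).symm]
      · simp [hB _ x, hBx, Fin.succ_ne_zero]
      · rename_i i j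
        have h : B (v i : V) (v j : V) = if i = j then (σ i : ℂ) else 0 := hvB i j
        simpa using h

/-- Takagi (Autonne–Takagi) factorization: every complex symmetric matrix `A` can be
written as `A = Uᵀ Σ U` with `U` unitary and `Σ` a nonnegative diagonal matrix whose
diagonal entries are the singular values of `A` (i.e. `A†A = U† Σ² U`). -/
theorem takagi_decomposition {n : ℕ} (A : Matrix (Fin n) (Fin n) ℂ) (hsymm : Aᵀ = A) :
    ∃ (U : Matrix (Fin n) (Fin n) ℂ) (σ : Fin n → ℝ),
      U ∈ Matrix.unitaryGroup (Fin n) ℂ ∧ (∀ i, 0 ≤ σ i) ∧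
      A = Uᵀ * Matrix.diagonal (fun i => (σ i : ℂ)) * U ∧
      Aᴴ * A = Uᴴ * Matrix.diagonal (fun i => ((σ i : ℂ)) ^ 2) * U := by
  let e : EuclideanSpace ℂ (Fin n) →ₗ[ℂ] (Fin n → ℂ) :=
    (WithLp.linearEquiv 2 ℂ (Fin n → ℂ)).toLinearMap
  let B : EuclideanSpace ℂ (Fin n) →ₗ[ℂ] EuclideanSpace ℂ (Fin n) →ₗ[ℂ] ℂ :=
    (Matrix.toLinearMap₂' ℂ A).compl₁₂ e e
  have hBe : ∀ x y, B x y = (x.ofLp) ⬝ᵥ (A *ᵥ y.ofLp) := fun x y =>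
    Matrix.toLinearMap₂'_apply' A _ _
  obtain ⟨v, σ, hv, hσ, hvB⟩ := takagi_basis n (EuclideanSpace ℂ (Fin n)) (by simp) B (by
    intro x y
    rw [hBe, hBe, Matrix.dotProduct_mulVec, ← Matrix.mulVec_transpose, hsymm, dotProduct_comm])
  rw [orthonormal_iff_ite] at hv
  let P : Matrix (Fin n) (Fin n) ℂ := Matrix.of fun i j => v j i
  have hP : Pᴴ * P = 1 := by
    ext i j
    rw [Matrix.one_apply, ← hv i j, Matrix.mul_apply, PiLp.inner_apply]
    simp [P, mul_comm]
  have hP' : P * Pᴴ = 1 := mul_eq_one_comm.mp hP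
  have hD : Pᵀ * A * P = Matrix.diagonal (fun i => (σ i : ℂ)) := by
    ext i j
    rw [Matrix.diagonal_apply, ← hvB i j, hBe, Matrix.mul_assoc, Matrix.mul_apply]
    simp [P, dotProduct, Matrix.mul_apply, Matrix.mulVec]
  have hT : Pᴴᵀ * Pᵀ = 1 := by rw [← Matrix.transpose_mul, hP', Matrix.transpose_one]
  have hT' : Pᵀ * Pᴴᵀ = 1 := mul_eq_one_comm.mp hT
  have hA : A = Pᴴᵀ * Matrix.diagonal (fun i => (σ i : ℂ)) * Pᴴ := by
    rw [← hD]
    calc A = (Pᴴᵀ * Pᵀ) * A * (P * Pᴴ) := by rw [hT, hP']; simp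
      _ = _ := by simp only [Matrix.mul_assoc]
  refine ⟨Pᴴ, σ, ?_, hσ, hA, ?_⟩
  · rw [Matrix.mem_unitaryGroup_iff, Matrix.star_eq_conjTranspose]
    simpa using hP
  · have hd : (Matrix.diagonal (fun i => (σ i : ℂ)))ᴴ = Matrix.diagonal (fun i => (σ i : ℂ)) := by
      rw [Matrix.diagonal_conjTranspose]
      congr 1; ext i; simp
    have hc : Pᴴᵀᴴ = Pᵀ := by ext i j; simp
    have hA2 : Aᴴ = P * Matrix.diagonal (fun i => (σ i : ℂ)) * Pᵀ := by
      conv_lhs => rw [hA]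
      rw [Matrix.conjTranspose_mul, Matrix.conjTranspose_mul, hd, hc,
        Matrix.conjTranspose_conjTranspose, Matrix.mul_assoc]
    rw [hA2]
    conv_lhs => rw [hA]
    calc _ = P * Matrix.diagonal (fun i => (σ i : ℂ)) * (Pᵀ * Pᴴᵀ) *
          Matrix.diagonal (fun i => (σ i : ℂ)) * Pᴴ := by simp only [Matrix.mul_assoc]
      _ = _ := by
        rw [hT', Matrix.mul_one, Matrix.mul_assoc P, Matrix.diagonal_mul_diagonal,
          Matrix.conjTranspose_conjTranspose]
        simp only [sq]
end

section
/- Let A be a complex symmetric 3×3 matrix with singular values σ₁ ≥ σ₂ ≥ σ₃ and let σ₁ < σ₂ + σ₃. Then the minimum of ∑_{k=1}^3 |(Tᵀ A T)_{kk}| over unitary 3×3 matrices T equals |σ₁ − σ₂ − σ₃| > 0, whereas the minimum over 3×4 right-unitary T (T T† = I₃) equals 0. -/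
open Matrix

lemma cj_degenerate (b c r : ℂ) (hb : ‖b‖ ^ 2 + ‖r‖ ^ 2 = 1) (hc : ‖r‖ ^ 2 + ‖c‖ ^ 2 = 1)
    (h : b * star r + r * star c = 0) :
    ∃ y z : ℂ, r = 2 * y * z ∧ ‖b - 2 * y ^ 2‖ ≤ 1 ∧ ‖c - 2 * z ^ 2‖ ≤ 1 := by
  by_cases hr : r = 0
  · refine ⟨0, 0, by simp [hr], ?_, ?_⟩
    · have : ‖b‖ ≤ 1 := by nlinarith [norm_nonneg b, sq_nonneg ‖r‖]
      simpa using this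
    · have : ‖c‖ ≤ 1 := by nlinarith [norm_nonneg c, sq_nonneg ‖r‖]
      simpa using this
  obtain ⟨u, hu, hbu⟩ : ∃ u : ℂ, ‖u‖ = 1 ∧ b = ‖b‖ * u := by
    by_cases hb0 : b = 0
    · exact ⟨1, by simp, by simp [hb0]⟩
    · have : (‖b‖ : ℂ) ≠ 0 := by simpa using hb0
      refine ⟨b / ‖b‖, ?_, by field_simp⟩
      rw [norm_div]
      simp [hb0]
  have huu : u * star u = 1 := by
    have := Complex.mul_conj u
    rw [Complex.normSq_eq_norm_sq, hu] at this
    simpa using this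
  have hrr : r * star r = ‖r‖ ^ 2 := by
    have := Complex.mul_conj r
    rw [Complex.normSq_eq_norm_sq] at this
    simpa using this
  set s := ‖b‖ with hs
  have hs0 : 0 ≤ s := norm_nonneg b
  have hs1 : (1 + s : ℂ) ≠ 0 := by
    have : (1 + s : ℝ) ≠ 0 := by positivity
    exact_mod_cast this
  have hu0 : u ≠ 0 := by rintro rfl; simp at hu
  obtain ⟨y, hy⟩ := IsAlgClosed.exists_pow_nat_eq ((1 + s) * u / 2 : ℂ) (n := 2) (by norm_num)
  have hy0 : y ≠ 0 := by
    rintro rfl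
    have : (1 + s) * u / 2 ≠ 0 := by
      simp [hs1, hu0]
    apply this
    rw [← hy]; simp
  refine ⟨y, r / (2 * y), by field_simp, ?_, ?_⟩
  · rw [hy, hbu]
    have : (s * u - 2 * ((1 + s) * u / 2) : ℂ) = - u := by ring
    rw [this, norm_neg, hu]
  · have hz : 2 * (r / (2 * y)) ^ 2 = r ^ 2 * star u / (1 + s) := by
      have : 2 * (r / (2 * y)) ^ 2 = r ^ 2 / (2 * y ^ 2) := by
        field_simp
      rw [this, hy]
      rw [div_eq_div_iff (by simp [hs1, hu0]) hs1]
      linear_combination (-(r ^ 2 * (1 + s))) * huu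
    rw [hz]
    have hsc : star b * r + star r * c = 0 := by
      have := congrArg star h
      simp only [star_add, star_mul', star_star, star_zero] at this
      linear_combination this
    have hbs : star b = s * star u := by
      conv_lhs => rw [hbu]
      simp
    have hR : (s : ℂ) ^ 2 + (‖r‖ : ℂ) ^ 2 = 1 := by exact_mod_cast hb
    have key : (c - r ^ 2 * star u / (1 + s)) * star r = - (star u * r) := by
      rw [hbs] at hsc
      field_simp
      linear_combination (1 + (s : ℂ)) * hsc - r * star u * hrr - r * star u * hR
    have hn := congrArg norm key
    rw [norm_mul, norm_neg, norm_mul, norm_star, norm_star, hu, one_mul] at hn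
    have hr' : ‖r‖ ≠ 0 := by simpa using hr
    exact (mul_right_cancel₀ hr' (hn.trans (one_mul _).symm)).le

lemma cj_nondegenerate (a b c p q r : ℂ) (hp : p ≠ 0) (hq : q ≠ 0) (hr : r ≠ 0)
    (h1 : ‖a * r - p * q‖ = ‖r‖) (h2 : ‖b * q - p * r‖ = ‖q‖) (h3 : ‖c * p - q * r‖ = ‖p‖) :
    ∃ x y z : ℂ, p = 2 * x * y ∧ q = 2 * x * z ∧ r = 2 * y * z ∧
      ‖a - 2 * x ^ 2‖ ≤ 1 ∧ ‖b - 2 * y ^ 2‖ ≤ 1 ∧ ‖c - 2 * z ^ 2‖ ≤ 1 := by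
  obtain ⟨x, hx⟩ := IsAlgClosed.exists_pow_nat_eq (p * q / (2 * r) : ℂ) (n := 2) (by norm_num)
  have hx0 : x ≠ 0 := by
    rintro rfl
    have : p * q / (2 * r) ≠ 0 := by simp [hp, hq, hr]
    apply this
    rw [← hx]; simp
  have hx' : 2 * r * x ^ 2 = p * q := by rw [hx]; field_simp
  refine ⟨x, p / (2 * x), q / (2 * x), by field_simp, by field_simp, ?_, ?_, ?_, ?_⟩
  · field_simp
    linear_combination hx'
  · have : a - 2 * x ^ 2 = (a * r - p * q) / r := by
      field_simp
      linear_combination -hx'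
    rw [this, norm_div, h1]
    exact div_self_le_one _
  · have : b - 2 * (p / (2 * x)) ^ 2 = (b * q - p * r) / q := by
      field_simp
      linear_combination p * hx'
    rw [this, norm_div, h2]
    exact div_self_le_one _
  · have : c - 2 * (q / (2 * x)) ^ 2 = (c * p - q * r) / p := by
      field_simp
      linear_combination q * hx'
    rw [this, norm_div, h3]
    exact div_self_le_one _

lemma cj_scalar (a b c p q r : ℂ)
    (ha : ‖a‖ ^ 2 + ‖p‖ ^ 2 + ‖q‖ ^ 2 = 1)
    (hb : ‖p‖ ^ 2 + ‖b‖ ^ 2 + ‖r‖ ^ 2 = 1)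
    (hc : ‖q‖ ^ 2 + ‖r‖ ^ 2 + ‖c‖ ^ 2 = 1)
    (h12 : a * star p + p * star b + q * star r = 0)
    (h13 : a * star q + p * star r + q * star c = 0)
    (h23 : p * star q + b * star r + r * star c = 0)
    (h1 : ‖a * r - p * q‖ = ‖r‖) (h2 : ‖b * q - p * r‖ = ‖q‖) (h3 : ‖c * p - q * r‖ = ‖p‖) :
    ∃ x y z : ℂ, p = 2 * x * y ∧ q = 2 * x * z ∧ r = 2 * y * z ∧
      ‖a - 2 * x ^ 2‖ ≤ 1 ∧ ‖b - 2 * y ^ 2‖ ≤ 1 ∧ ‖c - 2 * z ^ 2‖ ≤ 1 := by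
  have ha1 : ‖a‖ ≤ 1 := by
    nlinarith [norm_nonneg a, sq_nonneg ‖p‖, sq_nonneg ‖q‖]
  have hb1 : ‖b‖ ≤ 1 := by
    nlinarith [norm_nonneg b, sq_nonneg ‖p‖, sq_nonneg ‖r‖]
  have hc1 : ‖c‖ ≤ 1 := by
    nlinarith [norm_nonneg c, sq_nonneg ‖q‖, sq_nonneg ‖r‖]
  have cpq : p = 0 → q = 0 → ∃ x y z : ℂ, p = 2 * x * y ∧ q = 2 * x * z ∧ r = 2 * y * z ∧
      ‖a - 2 * x ^ 2‖ ≤ 1 ∧ ‖b - 2 * y ^ 2‖ ≤ 1 ∧ ‖c - 2 * z ^ 2‖ ≤ 1 := fun hp hq => by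
    subst hp; subst hq
    obtain ⟨y, z, e1, e2, e3⟩ := cj_degenerate b c r (by simpa using hb) (by simpa using hc)
      (by simpa using h23)
    exact ⟨0, y, z, by simp, by simp, e1, by simpa using ha1, e2, e3⟩
  have cpr : p = 0 → r = 0 → ∃ x y z : ℂ, p = 2 * x * y ∧ q = 2 * x * z ∧ r = 2 * y * z ∧
      ‖a - 2 * x ^ 2‖ ≤ 1 ∧ ‖b - 2 * y ^ 2‖ ≤ 1 ∧ ‖c - 2 * z ^ 2‖ ≤ 1 := fun hp hq => by
    subst hp; subst hq
    obtain ⟨y, z, e1, e2, e3⟩ := cj_degenerate a c q (by simpa using ha) (by simpa using hc)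
      (by simpa using h13)
    exact ⟨y, 0, z, by simp, e1, by simp, e2, by simpa using hb1, e3⟩
  have cqr : q = 0 → r = 0 → ∃ x y z : ℂ, p = 2 * x * y ∧ q = 2 * x * z ∧ r = 2 * y * z ∧
      ‖a - 2 * x ^ 2‖ ≤ 1 ∧ ‖b - 2 * y ^ 2‖ ≤ 1 ∧ ‖c - 2 * z ^ 2‖ ≤ 1 := fun hp hq => by
    subst hp; subst hq
    obtain ⟨y, z, e1, e2, e3⟩ := cj_degenerate a b p (by simpa using ha) (by simpa using hb)
      (by simpa using h12)
    exact ⟨y, z, 0, e1, by simp, by simp, e2, e3, by simpa using hc1⟩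
  by_cases hp : p = 0
  · have : q = 0 ∨ r = 0 := by simpa [hp] using h12
    rcases this with h | h
    · exact cpq hp h
    · exact cpr hp h
  by_cases hq : q = 0
  · have : p = 0 ∨ r = 0 := by simpa [hq] using h13
    rcases this with h | h
    · exact cpq h hq
    · exact cqr hq h
  by_cases hr : r = 0
  · have : p = 0 ∨ q = 0 := by simpa [hr] using h23
    rcases this with h | h
    · exact cpr h hr
    · exact cqr h hr
  exact cj_nondegenerate a b c p q r hp hq hr h1 h2 h3

lemma cj_norm (V : Matrix (Fin 3) (Fin 3) ℂ) (hV : Vᴴ * V = 1) (z : Fin 3 → ℂ) :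
    ∑ i, ‖(V *ᵥ z) i‖ ^ 2 = ∑ i, ‖z i‖ ^ 2 := by
  have key : ∀ w : Fin 3 → ℂ, ((∑ i, ‖w i‖ ^ 2 : ℝ) : ℂ) = star w ⬝ᵥ w := by
    intro w
    simp only [dotProduct, Pi.star_apply]
    push_cast
    refine Finset.sum_congr rfl fun i _ => ?_
    exact (Complex.conj_mul' (w i)).symm
  have : ((∑ i, ‖(V *ᵥ z) i‖ ^ 2 : ℝ) : ℂ) = ((∑ i, ‖z i‖ ^ 2 : ℝ) : ℂ) := by
    rw [key, key, star_mulVec, dotProduct_mulVec, vecMul_vecMul, hV, vecMul_one]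
  exact_mod_cast this

/-- A symmetric unitary 3×3 matrix is a rank-one symmetric matrix plus a diagonal contraction. -/
lemma cj_decomp (W : Matrix (Fin 3) (Fin 3) ℂ) (hW : W * Wᴴ = 1) (hs : Wᵀ = W) :
    ∃ z e : Fin 3 → ℂ, (∀ i, ‖e i‖ ≤ 1) ∧
      W = (2 : ℂ) • vecMulVec z z + diagonal e ∧ ∑ i, ‖z i‖ ^ 2 ≤ 1 := by
  have s10 : W 1 0 = W 0 1 := congrFun (congrFun hs 0) 1
  have s20 : W 2 0 = W 0 2 := congrFun (congrFun hs 0) 2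
  have s21 : W 2 1 = W 1 2 := congrFun (congrFun hs 1) 2
  have hdet : ‖W.det‖ = 1 := by
    have h := congrArg det hW
    rw [det_mul, det_conjTranspose, det_one] at h
    have h' := congrArg norm h
    rw [norm_mul, norm_star, norm_one] at h'
    nlinarith [norm_nonneg W.det]
  have hadj : W.adjugate = W.det • Wᴴ := by
    calc W.adjugate = W.adjugate * (W * Wᴴ) := by rw [hW, mul_one]
      _ = W.det • Wᴴ := by rw [← mul_assoc, adjugate_mul]; simp
  have hadjn : ∀ i j, ‖W.adjugate i j‖ = ‖W j i‖ := by
    intro i j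
    rw [hadj]
    simp [hdet]
  have hE : ∀ i j, ∑ k, W i k * star (W j k) = (1 : Matrix (Fin 3) (Fin 3) ℂ) i j := by
    intro i j
    rw [← hW]
    simp [mul_apply]
  have hN : ∀ i, ∑ k, ‖W i k‖ ^ 2 = 1 := by
    intro i
    have h := hE i i
    have h2 : ((∑ k, ‖W i k‖ ^ 2 : ℝ) : ℂ) = 1 := by
      rw [one_apply_eq] at h
      rw [← h]
      push_cast
      refine Finset.sum_congr rfl fun k _ => ?_
      exact (Complex.mul_conj' (W i k)).symm
    exact_mod_cast h2
  have n0 := hN 0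
  have n1 := hN 1
  have n2 := hN 2
  have e01 := hE 0 1
  have e02 := hE 0 2
  have e12 := hE 1 2
  have a12 := hadjn 1 2
  have a02 := hadjn 0 2
  have a01 := hadjn 0 1
  rw [adjugate_fin_three] at a12 a02 a01
  simp [Fin.sum_univ_three, s10, s20, s21] at n0 n1 n2 e01 e02 e12 a12 a02 a01
  obtain ⟨x, y, z, hp, hq, hr, h0, h1, h2⟩ := cj_scalar (W 0 0) (W 1 1) (W 2 2) (W 0 1) (W 0 2) (W 1 2)
    n0 n1 n2 e01 e02 e12
    (by rw [← a12, ← norm_neg]; congr 1; ring)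
    (by rw [← a02, ← norm_neg]; congr 1; ring)
    (by rw [← a01, ← norm_neg]; congr 1; ring)
  have hdec : W = (2 : ℂ) • vecMulVec ![x, y, z] ![x, y, z] +
      diagonal ![W 0 0 - 2 * x ^ 2, W 1 1 - 2 * y ^ 2, W 2 2 - 2 * z ^ 2] := by
    ext i j
    fin_cases i <;> fin_cases j <;> simp [vecMulVec_apply, s10, s20, s21] <;>
      first
      | linear_combination hp
      | linear_combination hq
      | linear_combination hr
      | ring
  have hen : ∀ i, ‖(![W 0 0 - 2 * x ^ 2, W 1 1 - 2 * y ^ 2, W 2 2 - 2 * z ^ 2] : Fin 3 → ℂ) i‖ ≤ 1 := by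
    intro i
    fin_cases i <;> simpa
  generalize (![W 0 0 - 2 * x ^ 2, W 1 1 - 2 * y ^ 2, W 2 2 - 2 * z ^ 2] : Fin 3 → ℂ) = e at hdec hen
  generalize (![x, y, z] : Fin 3 → ℂ) = v at hdec
  refine ⟨v, e, hen, hdec, ?_⟩
  by_contra hn
  push Not at hn
  have hnorm := cj_norm W (mul_eq_one_comm.mp hW) (star v)
  set n := ∑ i, ‖v i‖ ^ 2 with hndef
  have hsn : ∑ i, ‖(star v) i‖ ^ 2 = n := by simp [hndef]
  rw [hsn] at hnorm
  have hWv : ∀ i, (W *ᵥ star v) i = 2 * n * v i + e i * star (v i) := by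
    intro i
    have hvv : v ⬝ᵥ star v = (n : ℂ) := by
      simp only [dotProduct, Pi.star_apply, hndef]
      push_cast
      refine Finset.sum_congr rfl fun i _ => ?_
      exact Complex.mul_conj' (v i)
    rw [hdec, add_mulVec, smul_mulVec, vecMulVec_mulVec, hvv]
    simp [mulVec_diagonal]
    ring
  have hlow : ∀ i, (2 * n - 1) * ‖v i‖ ≤ ‖(W *ᵥ star v) i‖ := by
    intro i
    rw [hWv]
    have h1 := norm_sub_le_norm_add (2 * n * v i : ℂ) (e i * star (v i))
    have h2 : ‖(2 * n * v i : ℂ)‖ = 2 * n * ‖v i‖ := by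
      simp [abs_of_pos (by linarith : 0 < n)]
    have h3 : ‖e i * star (v i)‖ ≤ ‖v i‖ := by
      rw [norm_mul, norm_star]
      exact mul_le_of_le_one_left (norm_nonneg _) (hen i)
    linarith
  have hsum : (2 * n - 1) ^ 2 * n ≤ n := by
    conv_rhs => rw [← hnorm]
    rw [hndef, Finset.mul_sum, ← hndef]
    refine Finset.sum_le_sum fun i _ => ?_
    rw [← mul_pow]
    exact pow_le_pow_left₀ (mul_nonneg (by linarith) (norm_nonneg _)) (hlow i) 2
  nlinarith [mul_pos (sub_pos.mpr hn) (by linarith : 0 < n)]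

lemma cj_lower (σ : Fin 3 → ℝ) (hσ0 : ∀ i, 0 ≤ σ i) (hσmono : Antitone σ)
    (V : Matrix (Fin 3) (Fin 3) ℂ) (hV : Vᴴ * V = 1) :
    σ 1 + σ 2 - σ 0 ≤ ∑ k, ‖(Vᵀ * diagonal (fun i => (σ i : ℂ)) * V) k k‖ := by
  set D : Matrix (Fin 3) (Fin 3) ℂ := diagonal (fun i => (σ i : ℂ)) with hD
  have hV' : V * Vᴴ = 1 := mul_eq_one_comm.mp hV
  have hT : Vᴴᵀ * Vᵀ = 1 := by rw [← transpose_mul, hV', transpose_one]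
  have hT' : Vᵀ * Vᴴᵀ = 1 := mul_eq_one_comm.mp hT
  have hWW : (Vᴴ * Vᴴᵀ) * (Vᴴ * Vᴴᵀ)ᴴ = 1 := by
    have : (Vᴴ * Vᴴᵀ)ᴴ = Vᵀ * V := by
      rw [conjTranspose_mul, conjTranspose_conjTranspose]
      congr 1
      ext i j; simp
    rw [this]
    calc Vᴴ * Vᴴᵀ * (Vᵀ * V) = Vᴴ * (Vᴴᵀ * Vᵀ) * V := by simp only [mul_assoc]
      _ = 1 := by rw [hT, mul_one, hV]
  obtain ⟨z, e, he, hdec, hz⟩ := cj_decomp (Vᴴ * Vᴴᵀ) hWW (by simp [transpose_mul])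
  set M := Vᵀ * D * V with hM
  have htr : (Vᴴ * Vᴴᵀ * M).trace = D.trace := by
    have : Vᴴ * Vᴴᵀ * M = Vᴴ * D * V := by
      calc Vᴴ * Vᴴᵀ * (Vᵀ * D * V) = Vᴴ * (Vᴴᵀ * Vᵀ) * D * V := by simp only [mul_assoc]
        _ = _ := by rw [hT, mul_one]
    rw [this, trace_mul_comm, ← mul_assoc, hV', one_mul]
  have htr2 : (Vᴴ * Vᴴᵀ * M).trace = 2 * (∑ i, (σ i : ℂ) * (V *ᵥ z) i ^ 2) + ∑ k, e k * M k k := by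
    rw [hdec, add_mul, trace_add, smul_mul, trace_smul, vecMulVec_mul, trace_vecMulVec]
    congr 1
    · rw [smul_eq_mul]
      congr 1
      rw [dotProduct_comm, ← dotProduct_mulVec, hM, ← mulVec_mulVec, ← mulVec_mulVec, dotProduct_mulVec,
        vecMul_transpose]
      simp only [dotProduct, hD, mulVec_diagonal]
      refine Finset.sum_congr rfl fun i _ => by ring
    · simp [trace, diagonal_mul]
  have hDt : D.trace = ((σ 0 + σ 1 + σ 2 : ℝ) : ℂ) := by
    simp [hD, trace, Fin.sum_univ_three]
  have h1 : ‖∑ i, (σ i : ℂ) * (V *ᵥ z) i ^ 2‖ ≤ σ 0 := by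
    calc ‖∑ i, (σ i : ℂ) * (V *ᵥ z) i ^ 2‖ ≤ ∑ i, ‖(σ i : ℂ) * (V *ᵥ z) i ^ 2‖ := norm_sum_le _ _
      _ ≤ ∑ i, σ 0 * ‖(V *ᵥ z) i‖ ^ 2 := by
        refine Finset.sum_le_sum fun i _ => ?_
        rw [norm_mul, norm_pow, Complex.norm_real, Real.norm_of_nonneg (hσ0 i)]
        exact mul_le_mul_of_nonneg_right (hσmono (Fin.zero_le i)) (by positivity)
      _ = σ 0 * ∑ i, ‖z i‖ ^ 2 := by rw [← Finset.mul_sum, cj_norm V hV]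
      _ ≤ σ 0 := mul_le_of_le_one_right (hσ0 0) hz
  have h2 : ‖∑ k, e k * M k k‖ ≤ ∑ k, ‖M k k‖ := by
    refine (norm_sum_le _ _).trans (Finset.sum_le_sum fun k _ => ?_)
    rw [norm_mul]
    exact mul_le_of_le_one_left (norm_nonneg _) (he k)
  have h3 : σ 0 + σ 1 + σ 2 ≤ 2 * σ 0 + ∑ k, ‖M k k‖ := by
    calc σ 0 + σ 1 + σ 2 = ‖D.trace‖ := by
          rw [hDt, Complex.norm_real, Real.norm_of_nonneg]
          linarith [hσ0 0, hσ0 1, hσ0 2]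
      _ = ‖2 * (∑ i, (σ i : ℂ) * (V *ᵥ z) i ^ 2) + ∑ k, e k * M k k‖ := by rw [← htr, htr2]
      _ ≤ _ := by
        refine (norm_add_le _ _).trans ?_
        rw [norm_mul]
        have : ‖(2 : ℂ)‖ = 2 := by simp
        rw [this]
        linarith
  linarith

lemma cj_attain3 (σ : Fin 3 → ℝ) (h0 : 0 < σ 0) (h1 : 0 < σ 1)
    (htri : σ 0 < σ 1 + σ 2) :
    ∃ V : Matrix (Fin 3) (Fin 3) ℂ, V * Vᴴ = 1 ∧
      σ 1 + σ 2 - σ 0 = ∑ k, ‖(Vᵀ * diagonal (fun i => (σ i : ℂ)) * V) k k‖ := by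
  obtain ⟨C, S, hCS, hz⟩ : ∃ C S : ℝ, C ^ 2 + S ^ 2 = 1 ∧ σ 0 * C ^ 2 = σ 1 * S ^ 2 := by
    refine ⟨√(σ 1 / (σ 0 + σ 1)), √(σ 0 / (σ 0 + σ 1)), ?_, ?_⟩ <;>
      rw [Real.sq_sqrt (by positivity), Real.sq_sqrt (by positivity)] <;> field_simp
    ring
  obtain ⟨h, hh⟩ : ∃ h : ℝ, h ^ 2 = 1 / 2 := ⟨√(1 / 2), Real.sq_sqrt (by norm_num)⟩
  have hCS' : (C : ℂ) ^ 2 + (S : ℂ) ^ 2 = 1 := by exact_mod_cast hCS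
  have hz' : (σ 0 : ℂ) * (C : ℂ) ^ 2 = σ 1 * (S : ℂ) ^ 2 := by exact_mod_cast hz
  have hh' : (h : ℂ) ^ 2 = 1 / 2 := by
    have := congrArg (fun x : ℝ => (x : ℂ)) hh
    simpa using this
  have hI : Complex.I ^ 2 = -1 := Complex.I_sq
  refine ⟨!![Complex.I * C, -(Complex.I * (h * S)), Complex.I * (h * S);
      (S : ℂ), h * C, -(h * C); 0, h, h], ?_, ?_⟩
  · ext i j
    fin_cases i <;> fin_cases j <;> simp [mul_apply, Fin.sum_univ_three]
    all_goals try ring_nf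
    all_goals try simp only [hI, hh']
    all_goals try ring_nf
    all_goals try linear_combination hCS'
  · have e0 : ((!![Complex.I * C, -(Complex.I * (h * S)), Complex.I * (h * S);
      (S : ℂ), h * C, -(h * C); 0, h, h])ᵀ * diagonal (fun i => (σ i : ℂ)) *
      !![Complex.I * C, -(Complex.I * (h * S)), Complex.I * (h * S);
      (S : ℂ), h * C, -(h * C); 0, h, h]) 0 0 = 0 := by
      simp [mul_apply, Fin.sum_univ_three, diagonal_apply]
      linear_combination (σ 0 : ℂ) * C ^ 2 * hI - hz'
    have e1 : ((!![Complex.I * C, -(Complex.I * (h * S)), Complex.I * (h * S);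
      (S : ℂ), h * C, -(h * C); 0, h, h])ᵀ * diagonal (fun i => (σ i : ℂ)) *
      !![Complex.I * C, -(Complex.I * (h * S)), Complex.I * (h * S);
      (S : ℂ), h * C, -(h * C); 0, h, h]) 1 1 = (((σ 1 + σ 2 - σ 0) / 2 : ℝ) : ℂ) := by
      simp [mul_apply, Fin.sum_univ_three, diagonal_apply]
      linear_combination (σ 0 : ℂ) * h ^ 2 * S ^ 2 * hI +
        (σ 1 * C ^ 2 + σ 2 - σ 0 * S ^ 2) * hh' + (σ 1 - σ 0) / 2 * hCS' + hz' / 2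
    have e2 : ((!![Complex.I * C, -(Complex.I * (h * S)), Complex.I * (h * S);
      (S : ℂ), h * C, -(h * C); 0, h, h])ᵀ * diagonal (fun i => (σ i : ℂ)) *
      !![Complex.I * C, -(Complex.I * (h * S)), Complex.I * (h * S);
      (S : ℂ), h * C, -(h * C); 0, h, h]) 2 2 = (((σ 1 + σ 2 - σ 0) / 2 : ℝ) : ℂ) := by
      simp [mul_apply, Fin.sum_univ_three, diagonal_apply]
      linear_combination (σ 0 : ℂ) * h ^ 2 * S ^ 2 * hI +
        (σ 1 * C ^ 2 + σ 2 - σ 0 * S ^ 2) * hh' + (σ 1 - σ 0) / 2 * hCS' + hz' / 2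
    rw [Fin.sum_univ_three, e0, e1, e2, Complex.norm_real, Real.norm_of_nonneg (by linarith), norm_zero]
    ring

lemma cj_attain4 (σ : Fin 3 → ℝ) (h0 : 0 < σ 0) (h1 : 0 < σ 1) (h2 : 0 < σ 2)
    (h01 : σ 1 ≤ σ 0) (h12 : σ 2 ≤ σ 1) (htri : σ 0 < σ 1 + σ 2) :
    ∃ V : Matrix (Fin 3) (Fin 4) ℂ, V * Vᴴ = 1 ∧
      ∀ k, (Vᵀ * diagonal (fun i => (σ i : ℂ)) * V) k k = 0 := by
  obtain ⟨x, hx, hx1⟩ : ∃ x : ℝ, 2 * σ 0 * σ 1 * x = σ 0 ^ 2 + σ 1 ^ 2 - σ 2 ^ 2 ∧ x ^ 2 ≤ 1 := by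
    refine ⟨(σ 0 ^ 2 + σ 1 ^ 2 - σ 2 ^ 2) / (2 * σ 0 * σ 1), by field_simp, ?_⟩
    rw [sq_le_one_iff_abs_le_one, abs_le]
    constructor
    · rw [le_div_iff₀ (by positivity)]
      nlinarith
    · rw [div_le_one (by positivity)]
      nlinarith
  obtain ⟨y, hy⟩ : ∃ y : ℝ, y ^ 2 = 1 - x ^ 2 := ⟨√(1 - x ^ 2), Real.sq_sqrt (by linarith)⟩
  have hsq : ∀ w : ℂ, ‖w‖ = 1 → ∃ v : ℂ, v ^ 2 = w ∧ v * star v = 1 := by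
    intro w hw
    obtain ⟨v, hv⟩ := IsAlgClosed.exists_pow_nat_eq w (n := 2) (by norm_num)
    refine ⟨v, hv, ?_⟩
    have h := congrArg norm hv
    rw [norm_pow, hw] at h
    have h' := Complex.mul_conj' v
    calc v * star v = (‖v‖ : ℂ) ^ 2 := h'
      _ = 1 := by exact_mod_cast h
  have hn1 : ‖(⟨x, y⟩ : ℂ)‖ = 1 := by
    have : ‖(⟨x, y⟩ : ℂ)‖ ^ 2 = 1 := by
      rw [← Complex.normSq_eq_norm_sq, Complex.normSq_mk]
      nlinarith
    nlinarith [norm_nonneg (⟨x, y⟩ : ℂ)]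
  have hn2 : ‖((σ 0 - σ 1 * (⟨x, y⟩ : ℂ)) / σ 2 : ℂ)‖ = 1 := by
    have : ‖(σ 0 - σ 1 * (⟨x, y⟩ : ℂ) : ℂ)‖ ^ 2 = σ 2 ^ 2 := by
      rw [← Complex.normSq_eq_norm_sq, Complex.normSq_apply]
      simp
      nlinarith
    have h3 : ‖(σ 0 - σ 1 * (⟨x, y⟩ : ℂ) : ℂ)‖ = σ 2 :=
      (pow_left_inj₀ (norm_nonneg _) h2.le (by norm_num)).mp this
    rw [norm_div, h3, Complex.norm_real, Real.norm_of_nonneg h2.le, div_self h2.ne']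
  obtain ⟨u, hu, hu1⟩ := hsq _ hn1
  obtain ⟨w, hw, hw1⟩ := hsq _ hn2
  obtain ⟨t, ht, ht1⟩ := hsq (-1) (by simp)
  have h2' : (σ 2 : ℂ) ≠ 0 := by exact_mod_cast h2.ne'
  have hsum : (σ 0 : ℂ) * t ^ 2 + σ 1 * u ^ 2 + σ 2 * w ^ 2 = 0 := by
    rw [ht, hu, hw]
    field_simp
    ring
  refine ⟨!![t / 2, t / 2, t / 2, t / 2; u / 2, -(u / 2), u / 2, -(u / 2);
    w / 2, w / 2, -(w / 2), -(w / 2)], ?_, ?_⟩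
  · simp only [Complex.star_def] at hu1 hw1 ht1
    ext i j
    fin_cases i <;> fin_cases j <;> simp [mul_apply, Fin.sum_univ_four]
    all_goals try simp only [show (starRingEnd ℂ) 2 = 2 from Complex.conj_ofNat 2]
    all_goals try ring_nf
    all_goals first
      | linear_combination ht1
      | linear_combination hu1
      | linear_combination hw1
  · intro k
    fin_cases k <;> simp [mul_apply, Fin.sum_univ_three, diagonal_apply] <;>
      linear_combination hsum / 4

/-- Cardinality jump for the concurrence of rank-3 states: for a complex symmetric
3×3 matrix `A` with singular values `σ₁ ≥ σ₂ ≥ σ₃` satisfying `σ₁ < σ₂ + σ₃`, the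
minimum of `∑_k |(Tᵀ A T)_{kk}|` over unitary 3×3 matrices `T` equals
`|σ₁ − σ₂ − σ₃| > 0`, while the minimum over right-unitary 3×4 matrices equals 0. -/
theorem concurrence_cardinality_jump
    (A : Matrix (Fin 3) (Fin 3) ℂ) (hsymm : Aᵀ = A)
    (σ : Fin 3 → ℝ) (hσ0 : ∀ i, 0 ≤ σ i) (hσmono : Antitone σ)
    (U : Matrix (Fin 3) (Fin 3) ℂ) (hU : U ∈ Matrix.unitaryGroup (Fin 3) ℂ)
    (hTakagi : A = Uᵀ * Matrix.diagonal (fun i => (σ i : ℂ)) * U)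
    (htri : σ 0 < σ 1 + σ 2) :
    IsLeast {c : ℝ | ∃ T : Matrix (Fin 3) (Fin 3) ℂ,
        T ∈ Matrix.unitaryGroup (Fin 3) ℂ ∧ c = ∑ k, ‖(Tᵀ * A * T) k k‖}
      |σ 0 - σ 1 - σ 2| ∧
    0 < |σ 0 - σ 1 - σ 2| ∧
    IsLeast {c : ℝ | ∃ T : Matrix (Fin 3) (Fin 4) ℂ,
        T * Tᴴ = 1 ∧ c = ∑ k, ‖(Tᵀ * A * T) k k‖} 0 := by
  have h01 : σ 1 ≤ σ 0 := hσmono (by decide)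
  have h12 : σ 2 ≤ σ 1 := hσmono (by decide)
  have h2 : 0 < σ 2 := by linarith
  have h1 : 0 < σ 1 := by linarith
  have h0 : 0 < σ 0 := by linarith
  have habs : |σ 0 - σ 1 - σ 2| = σ 1 + σ 2 - σ 0 := by
    rw [abs_of_neg (by linarith)]; ring
  have hU1 : U * Uᴴ = 1 := Matrix.mem_unitaryGroup_iff.mp hU
  have hU2 : Uᴴ * U = 1 := mul_eq_one_comm.mp hU1
  rw [habs]
  refine ⟨⟨?_, ?_⟩, by linarith, ⟨?_, ?_⟩⟩
  · obtain ⟨V, hV, hs⟩ := cj_attain3 σ h0 h1 htri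
    refine ⟨Uᴴ * V, ?_, ?_⟩
    · rw [Matrix.mem_unitaryGroup_iff, star_eq_conjTranspose, conjTranspose_mul,
        conjTranspose_conjTranspose]
      calc Uᴴ * V * (Vᴴ * U) = Uᴴ * (V * Vᴴ) * U := by simp only [Matrix.mul_assoc]
        _ = 1 := by rw [hV, Matrix.mul_one, hU2]
    · have hUV : U * (Uᴴ * V) = V := by rw [← Matrix.mul_assoc, hU1, Matrix.one_mul]
      have : (Uᴴ * V)ᵀ * A * (Uᴴ * V) = Vᵀ * diagonal (fun i => (σ i : ℂ)) * V := by
        conv_rhs => rw [← hUV]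
        rw [hTakagi, transpose_mul U]
        simp only [Matrix.mul_assoc]
      rw [this]
      exact hs
  · rintro c ⟨T, hT, rfl⟩
    have hT1 : Tᴴ * T = 1 := Matrix.mem_unitaryGroup_iff'.mp hT
    have hV : (U * T)ᴴ * (U * T) = 1 := by
      rw [conjTranspose_mul]
      calc Tᴴ * Uᴴ * (U * T) = Tᴴ * (Uᴴ * U) * T := by simp only [Matrix.mul_assoc]
        _ = 1 := by rw [hU2, Matrix.mul_one, hT1]
    have := cj_lower σ hσ0 hσmono (U * T) hV
    have he : (U * T)ᵀ * diagonal (fun i => (σ i : ℂ)) * (U * T) = Tᵀ * A * T := by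
      rw [hTakagi, transpose_mul U]
      simp only [Matrix.mul_assoc]
    rwa [he] at this
  · obtain ⟨V, hV, hs⟩ := cj_attain4 σ h0 h1 h2 h01 h12 htri
    refine ⟨Uᴴ * V, ?_, ?_⟩
    · rw [conjTranspose_mul, conjTranspose_conjTranspose]
      calc Uᴴ * V * (Vᴴ * U) = Uᴴ * (V * Vᴴ) * U := by simp only [Matrix.mul_assoc]
        _ = 1 := by rw [hV, Matrix.mul_one, hU2]
    · have hUV : U * (Uᴴ * V) = V := by rw [← Matrix.mul_assoc, hU1, Matrix.one_mul]
      have : (Uᴴ * V)ᵀ * A * (Uᴴ * V) = Vᵀ * diagonal (fun i => (σ i : ℂ)) * V := by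
        conv_rhs => rw [← hUV]
        rw [hTakagi, transpose_mul U]
        simp only [Matrix.mul_assoc]
      rw [this]
      simp [hs]
  · rintro c ⟨T, hT, rfl⟩
    exact Finset.sum_nonneg fun k _ => norm_nonneg _
end
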